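/- Let g : [0,1] → [0,1] be the tent map g(x) = 1 − |1 − 2x|. Then for Lebesgue-almost every x₀ ∈ [0,1] the orbit of x₀ is uniformly equidistributed: for all real a, b with 0 ≤ a ≤ b ≤ 1, the proportion (1/N)·#{ i : 0 ≤ i < N and gⁱ(x₀) ∈ [a,b] } tends to b − a as N → ∞. -/

import Mathlib

open MeasureTheory

/-!
On the circle `ℝ / 2ℤ`, the norm `‖y‖` is the distance from `y` to `0`, and it intertwines doubling
with the tent map: `‖2 • y‖ = 1 - |1 - 2 * ‖y‖|`. As it also carries Haar measure to Lebesgue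
measure on `[0, 1]`, it suffices that almost every orbit of the doubling map is equidistributed on
the circle. This is an instance of Weyl's theorem on `a i • y` for distinct integers `a i`: if
`n ≠ 0`, the functions `y ↦ fourier n (a i • y) = fourier (n * a i) y` are orthonormal, so their
`N`-th average has squared norm `1 / N`. This is summable along `N = m ^ 2`, so the averages
converge to `0` almost everywhere along the squares; as the functions are bounded and the gaps
between consecutive squares are relatively small, they do so along all `N`, and Weyl's criterion
concludes.
-/

open AddCircle Filter Set
open Finset (range)
open scoped BoundedContinuousFunction ENNReal Finset Topology

section CesaroAverage

/-- The average of the first `N` terms of the sequence `x`; it is `0` for `N = 0`. -/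
noncomputable def cesaroAverage (𝕜 : Type*) {E : Type*} [DivisionRing 𝕜] [AddCommMonoid E]
    [Module 𝕜 E] (x : ℕ → E) (N : ℕ) : E :=
  (N : 𝕜)⁻¹ • ∑ i ∈ range N, x i

variable (𝕜 : Type*) {E : Type*}

theorem cesaroAverage_zero [DivisionRing 𝕜] [AddCommMonoid E] [Module 𝕜 E] :
    cesaroAverage 𝕜 (fun _ => (0 : E)) = fun _ => 0 := by
  ext N
  rw [cesaroAverage, Finset.sum_const_zero, smul_zero]

theorem cesaroAverage_add [DivisionRing 𝕜] [AddCommMonoid E] [Module 𝕜 E] (x y : ℕ → E) :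
    cesaroAverage 𝕜 (fun i => x i + y i) = fun N => cesaroAverage 𝕜 x N + cesaroAverage 𝕜 y N := by
  ext N
  simp only [cesaroAverage, Finset.sum_add_distrib, smul_add]

theorem cesaroAverage_sub [DivisionRing 𝕜] [AddCommGroup E] [Module 𝕜 E] (x y : ℕ → E) :
    cesaroAverage 𝕜 (fun i => x i - y i) = fun N => cesaroAverage 𝕜 x N - cesaroAverage 𝕜 y N := by
  ext N
  simp only [cesaroAverage, Finset.sum_sub_distrib, smul_sub]

theorem cesaroAverage_smul [Field 𝕜] [AddCommMonoid E] [Module 𝕜 E] (c : 𝕜) (x : ℕ → E) :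
    cesaroAverage 𝕜 (fun i => c • x i) = fun N => c • cesaroAverage 𝕜 x N := by
  ext N
  simp only [cesaroAverage, ← Finset.smul_sum, smul_comm c]

theorem cesaroAverage_const [DivisionRing 𝕜] [CharZero 𝕜] [AddCommMonoid E] [Module 𝕜 E] (c : E)
    {N : ℕ} (hN : N ≠ 0) : cesaroAverage 𝕜 (fun _ => c) N = c := by
  rw [cesaroAverage, Finset.sum_const, Finset.card_range, ← Nat.cast_smul_eq_nsmul 𝕜,
    inv_smul_smul₀ (Nat.cast_ne_zero.2 hN)]

variable [RCLike 𝕜] [NormedAddCommGroup E] [NormedSpace 𝕜 E]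

theorem norm_cesaroAverage (x : ℕ → E) (N : ℕ) :
    ‖cesaroAverage 𝕜 x N‖ = (N : ℝ)⁻¹ * ‖∑ i ∈ range N, x i‖ := by
  rw [cesaroAverage, norm_smul, norm_inv, RCLike.norm_natCast]

theorem norm_cesaroAverage_le {x : ℕ → E} {C : ℝ} (hx : ∀ i, ‖x i‖ ≤ C) (N : ℕ) :
    ‖cesaroAverage 𝕜 x N‖ ≤ C := by
  have hC : 0 ≤ C := (norm_nonneg _).trans (hx 0)
  calc ‖cesaroAverage 𝕜 x N‖ = (N : ℝ)⁻¹ * ‖∑ i ∈ range N, x i‖ := norm_cesaroAverage 𝕜 x N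
    _ ≤ (N : ℝ)⁻¹ * (N * C) := by
        gcongr
        simpa using norm_sum_le_of_le (range N) fun i _ => hx i
    _ ≤ C := by
        rw [← mul_assoc]
        exact mul_le_of_le_one_left hC inv_mul_le_one

theorem norm_cesaroAverage_le_of_sq_le {x : ℕ → E} {C : ℝ} (hx : ∀ i, ‖x i‖ ≤ C) {m N : ℕ}
    (hm : m ≠ 0) (hmN : m ^ 2 ≤ N) (hNm : N ≤ m ^ 2 + 2 * m) :
    ‖cesaroAverage 𝕜 x N‖ ≤ ‖cesaroAverage 𝕜 x (m ^ 2)‖ + 2 * C / m := by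
  have : (0 : ℝ) < m := by positivity
  have hC : 0 ≤ C := (norm_nonneg _).trans (hx 0)
  have htail : ‖∑ i ∈ Finset.Ico (m ^ 2) N, x i‖ ≤ 2 * m * C := by
    calc ‖∑ i ∈ Finset.Ico (m ^ 2) N, x i‖ ≤ (N - m ^ 2 : ℕ) * C := by
          simpa using norm_sum_le_of_le (Finset.Ico (m ^ 2) N) fun i _ => hx i
      _ ≤ (2 * m : ℕ) * C := by gcongr; omega
      _ = 2 * m * C := by push_cast; ring
  calc ‖cesaroAverage 𝕜 x N‖ = (N : ℝ)⁻¹ * ‖∑ i ∈ range N, x i‖ := norm_cesaroAverage 𝕜 x N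
    _ ≤ ((m ^ 2 : ℕ) : ℝ)⁻¹ * (‖∑ i ∈ range (m ^ 2), x i‖ + 2 * m * C) := by
        rw [← Finset.sum_range_add_sum_Ico _ hmN]
        gcongr
        exact norm_add_le_of_le le_rfl htail
    _ = ‖cesaroAverage 𝕜 x (m ^ 2)‖ + 2 * C / m := by
        rw [norm_cesaroAverage]
        push_cast
        field_simp

theorem tendsto_cesaroAverage_zero_of_sq {x : ℕ → E} {C : ℝ} (hx : ∀ i, ‖x i‖ ≤ C)
    (hsq : Tendsto (fun m : ℕ => cesaroAverage 𝕜 x (m ^ 2)) atTop (𝓝 0)) :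
    Tendsto (cesaroAverage 𝕜 x) atTop (𝓝 0) := by
  have hsqrt : Tendsto Nat.sqrt atTop atTop :=
    tendsto_atTop_atTop.2 fun b => ⟨b * b, fun _ => Nat.le_sqrt.2⟩
  have hbound : Tendsto (fun m : ℕ => ‖cesaroAverage 𝕜 x (m ^ 2)‖ + 2 * C / m) atTop (𝓝 0) := by
    simpa using hsq.norm.add (tendsto_const_div_atTop_nhds_zero_nat (2 * C))
  refine squeeze_zero_norm' ?_ (hbound.comp hsqrt)
  filter_upwards [eventually_ge_atTop 1] with N hN
  exact norm_cesaroAverage_le_of_sq_le 𝕜 hx (Nat.sqrt_pos.2 hN).ne' (Nat.sqrt_le' N)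
    (by nlinarith [Nat.sqrt_le_add N])

end CesaroAverage

section OrthonormalLaw

variable {Ω 𝕜 E : Type*} [MeasurableSpace Ω] {μ : Measure Ω} [RCLike 𝕜] [NormedAddCommGroup E]

theorem ae_tendsto_zero_of_tsum_lintegral_ne_top {f : ℕ → Ω → ℝ≥0∞}
    (hf : ∀ n, AEMeasurable (f n) μ) (hsum : ∑' n, ∫⁻ ω, f n ω ∂μ ≠ ∞) :
    ∀ᵐ ω ∂μ, Tendsto (fun n => f n ω) atTop (𝓝 0) := by
  rw [← lintegral_tsum hf] at hsum
  filter_upwards [ae_lt_top' (AEMeasurable.tsum hf) hsum] with ω hω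
  exact ENNReal.tendsto_atTop_zero_of_tsum_ne_top hω.ne

theorem ae_tendsto_zero_of_summable_norm_sq {f : ℕ → Lp E 2 μ}
    (hf : Summable fun n => ‖f n‖ ^ 2) : ∀ᵐ ω ∂μ, Tendsto (fun n => f n ω) atTop (𝓝 0) := by
  have hint (n : ℕ) : ∫⁻ ω, ‖f n ω‖ₑ ^ 2 ∂μ = ENNReal.ofReal (‖f n‖ ^ 2) := by
    rw [ENNReal.ofReal_pow (norm_nonneg _), ofReal_norm, Lp.enorm_def]
    simpa using (eLpNorm_nnreal_pow_eq_lintegral (f := f n) (μ := μ) two_ne_zero).symm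
  have hae := ae_tendsto_zero_of_tsum_lintegral_ne_top
    (fun n => (Lp.aestronglyMeasurable (f n)).enorm.pow_const 2)
    (by simpa only [hint] using hf.tsum_ofReal_ne_top)
  filter_upwards [hae] with ω hω
  have hsqrt (n : ℕ) : (‖f n ω‖ₑ ^ 2) ^ (2⁻¹ : ℝ) = ‖f n ω‖ₑ := by
    exact_mod_cast ENNReal.pow_rpow_inv_natCast two_ne_zero ‖f n ω‖ₑ
  rw [tendsto_zero_iff_enorm_tendsto_zero]
  simpa [hsqrt] using hω.ennrpow_const (2⁻¹ : ℝ)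

variable [InnerProductSpace 𝕜 E]

theorem norm_sum_sq_of_orthonormal {ι : Type*} {v : ι → E} (hv : Orthonormal 𝕜 v)
    (s : Finset ι) : ‖∑ i ∈ s, v i‖ ^ 2 = #s := by
  simpa using hv.orthogonalFamily.norm_sum (fun _ => (1 : 𝕜)) s

theorem norm_cesaroAverage_sq_of_orthonormal {v : ℕ → E} (hv : Orthonormal 𝕜 v) (N : ℕ) :
    ‖cesaroAverage 𝕜 v N‖ ^ 2 = (N : ℝ)⁻¹ := by
  rw [norm_cesaroAverage, mul_pow, norm_sum_sq_of_orthonormal hv, Finset.card_range]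
  rcases eq_or_ne N 0 with rfl | hN
  · simp
  · field_simp

theorem ae_tendsto_cesaroAverage_zero_of_orthonormal {X : ℕ → Lp E 2 μ} (hX : Orthonormal 𝕜 X)
    {C : ℝ} (hC : ∀ i, ∀ᵐ ω ∂μ, ‖X i ω‖ ≤ C) :
    ∀ᵐ ω ∂μ, Tendsto (cesaroAverage 𝕜 fun i => X i ω) atTop (𝓝 0) := by
  have hsummable : Summable fun m : ℕ => ‖cesaroAverage 𝕜 X (m ^ 2)‖ ^ 2 := by
    simp [norm_cesaroAverage_sq_of_orthonormal hX]
  have hcoe : ∀ᵐ ω ∂μ, ∀ N, cesaroAverage 𝕜 X N ω = cesaroAverage 𝕜 (fun i => X i ω) N := by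
    refine ae_all_iff.2 fun N => ?_
    filter_upwards [Lp.coeFn_smul (N : 𝕜)⁻¹ (∑ i ∈ range N, X i),
      Lp.coeFn_fun_finsetSum (range N) X] with ω hsmul hsum
    simp only [cesaroAverage, hsmul, Pi.smul_apply, hsum]
  filter_upwards [ae_tendsto_zero_of_summable_norm_sq hsummable, hcoe, ae_all_iff.2 hC]
    with ω hlim hω hbound
  refine tendsto_cesaroAverage_zero_of_sq 𝕜 hbound ?_
  simpa only [hω] using hlim

end OrthonormalLaw

section Equidistribution

variable {X Y : Type*} [MeasurableSpace X] [MeasurableSpace Y]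

/-- The uniform probability measure on the first `N + 1` terms of `u`; the shift of the index makes
it a probability measure for every `N`. -/
noncomputable def empiricalMeasure (u : ℕ → X) (N : ℕ) : ProbabilityMeasure X :=
  ⟨((N + 1 : ℕ) : ℝ≥0∞)⁻¹ • ∑ i ∈ range (N + 1), Measure.dirac (u i),
    ⟨by simp [ENNReal.inv_mul_cancel]⟩⟩

theorem empiricalMeasure_real_apply {E : Set X} [DecidablePred (· ∈ E)] (hE : MeasurableSet E)
    (u : ℕ → X) (N : ℕ) :
    (empiricalMeasure u N : Measure X).real E =
      #{i ∈ range (N + 1) | u i ∈ E} / ((N + 1 : ℕ) : ℝ) := by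
  rw [empiricalMeasure, ProbabilityMeasure.coe_mk, measureReal_ennreal_smul_apply,
    measureReal_def, Measure.finsetSum_apply, div_eq_inv_mul]
  simp only [Measure.dirac_apply' _ hE, indicator_apply, Pi.one_apply, Finset.sum_boole,
    ENNReal.toReal_inv, ENNReal.toReal_natCast]

variable [TopologicalSpace X] [TopologicalSpace Y]

/-- A sequence `u` is equidistributed with respect to `μ` if the averages of every bounded
continuous function along `u` converge to its integral. -/
def Equidistributed (μ : Measure X) (u : ℕ → X) : Prop :=
  ∀ f : X →ᵇ ℝ, Tendsto (cesaroAverage ℝ fun i => f (u i)) atTop (𝓝 (∫ x, f x ∂μ))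

theorem Equidistributed.comp_measurePreserving [OpensMeasurableSpace Y] {μ : Measure X}
    {ν : Measure Y} {u : ℕ → X} {φ : X → Y} (hu : Equidistributed μ u)
    (hφ : MeasurePreserving φ μ ν) (hcont : Continuous φ) : Equidistributed ν (φ ∘ u) := by
  intro f
  rw [← hφ.map_eq, integral_map hφ.aemeasurable
    f.continuous.measurable.aestronglyMeasurable]
  exact hu (f.compContinuous ⟨φ, hcont⟩)

theorem integral_empiricalMeasure [OpensMeasurableSpace X] (u : ℕ → X) (N : ℕ) (f : X →ᵇ ℝ) :
    ∫ x, f x ∂(empiricalMeasure u N : Measure X) =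
      cesaroAverage ℝ (fun i => f (u i)) (N + 1) := by
  rw [empiricalMeasure, ProbabilityMeasure.coe_mk, integral_smul_measure,
    integral_finsetSum_measure fun i _ => f.integrable _, ENNReal.toReal_inv,
    ENNReal.toReal_natCast, cesaroAverage]
  simp only [integral_dirac' _ _ f.continuous.stronglyMeasurable]

theorem Equidistributed.tendsto_card_filter_div [OpensMeasurableSpace X] [HasOuterApproxClosed X]
    {μ : Measure X} [IsProbabilityMeasure μ] {u : ℕ → X} (hu : Equidistributed μ u) {E : Set X}
    [DecidablePred (· ∈ E)] (hE : MeasurableSet E) (hfrontier : μ (frontier E) = 0) :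
    Tendsto (fun N : ℕ => (#{i ∈ range N | u i ∈ E} / N : ℝ)) atTop (𝓝 (μ.real E)) := by
  let ν : ProbabilityMeasure X := ⟨μ, inferInstance⟩
  have hweak : Tendsto (empiricalMeasure u) atTop (𝓝 ν) := by
    refine ProbabilityMeasure.tendsto_iff_forall_integral_tendsto.2 fun f => ?_
    simp only [integral_empiricalMeasure]
    exact (hu f).comp (tendsto_add_atTop_nat 1)
  have hmeasure : Tendsto (fun N => (empiricalMeasure u N : Measure X) E) atTop (𝓝 (μ E)) :=
    ProbabilityMeasure.tendsto_measure_of_null_frontier_of_tendsto' hweak hfrontier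
  rw [← tendsto_add_atTop_iff_nat 1]
  simpa only [← empiricalMeasure_real_apply hE, measureReal_def, Function.comp_def] using
    (ENNReal.tendsto_toReal (measure_ne_top μ E)).comp hmeasure

end Equidistribution

section WeylCriterion

variable {X 𝕜 : Type*} [TopologicalSpace X] [CompactSpace X] [RCLike 𝕜]

theorem lipschitzWith_one_cesaroAverage_apply (u : ℕ → X) (N : ℕ) :
    LipschitzWith 1 fun f : C(X, 𝕜) => cesaroAverage 𝕜 (fun i => f (u i)) N := by
  refine LipschitzWith.of_dist_le_mul fun f g => ?_
  have hsub : cesaroAverage 𝕜 (fun i => (f - g) (u i)) N =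
      cesaroAverage 𝕜 (fun i => f (u i)) N - cesaroAverage 𝕜 (fun i => g (u i)) N :=
    congrFun (cesaroAverage_sub 𝕜 _ _) N
  rw [NNReal.coe_one, one_mul, dist_eq_norm, dist_eq_norm, ← hsub]
  exact norm_cesaroAverage_le 𝕜 (fun i => (f - g).norm_coe_le_norm (u i)) N

variable [MeasurableSpace X] [OpensMeasurableSpace X]

theorem integrable_continuousMap {μ : Measure X} [IsFiniteMeasure μ] (f : C(X, 𝕜)) :
    Integrable f μ :=
  f.continuous.integrable_of_hasCompactSupport (HasCompactSupport.of_compactSpace f)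

theorem lipschitzWith_integral (μ : Measure X) [IsFiniteMeasure μ] :
    LipschitzWith (measureUnivNNReal μ) fun f : C(X, 𝕜) => ∫ x, f x ∂μ := by
  refine LipschitzWith.of_dist_le_mul fun f g => ?_
  rw [dist_eq_norm, dist_eq_norm, mul_comm,
    ← integral_sub (integrable_continuousMap f) (integrable_continuousMap g)]
  exact norm_integral_le_of_norm_le_const
    (Eventually.of_forall fun x => (f - g).norm_coe_le_norm x)

theorem isClosed_setOf_tendsto_cesaroAverage (μ : Measure X) [IsFiniteMeasure μ]
    (u : ℕ → X) :
    IsClosed {f : C(X, 𝕜) |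
      Tendsto (cesaroAverage 𝕜 fun i => f (u i)) atTop (𝓝 (∫ x, f x ∂μ))} :=
  (LipschitzWith.uniformEquicontinuous _ 1
    (lipschitzWith_one_cesaroAverage_apply u)).equicontinuous.isClosed_setOfPred_tendsto
    (lipschitzWith_integral μ).continuous

theorem tendsto_cesaroAverage_of_mem_span {μ : Measure X} [IsFiniteMeasure μ] {u : ℕ → X}
    {S : Set C(X, 𝕜)}
    (hS : ∀ f ∈ S, Tendsto (cesaroAverage 𝕜 fun i => f (u i)) atTop (𝓝 (∫ x, f x ∂μ)))
    {f : C(X, 𝕜)} (hf : f ∈ Submodule.span 𝕜 S) :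
    Tendsto (cesaroAverage 𝕜 fun i => f (u i)) atTop (𝓝 (∫ x, f x ∂μ)) := by
  induction hf using Submodule.span_induction with
  | mem f hf => exact hS f hf
  | zero =>
    simp only [ContinuousMap.zero_apply, cesaroAverage_zero, integral_zero]
    exact tendsto_const_nhds
  | add f g _ _ hf hg =>
    simpa only [ContinuousMap.add_apply, cesaroAverage_add,
      integral_add (integrable_continuousMap f) (integrable_continuousMap g)] using hf.add hg
  | smul c f _ hf =>
    simpa only [ContinuousMap.smul_apply, cesaroAverage_smul, integral_smul] using hf.const_smul c

theorem equidistributed_of_dense_span {μ : Measure X} [IsFiniteMeasure μ] {u : ℕ → X}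
    {S : Set C(X, 𝕜)} (hdense : (Submodule.span 𝕜 S).topologicalClosure = ⊤)
    (hS : ∀ f ∈ S, Tendsto (cesaroAverage 𝕜 fun i => f (u i)) atTop (𝓝 (∫ x, f x ∂μ))) :
    Equidistributed μ u := by
  intro f
  let F : C(X, 𝕜) := ⟨fun x => (f x : 𝕜), by fun_prop⟩
  have hF : F ∈ closure (Submodule.span 𝕜 S : Set C(X, 𝕜)) := by
    rw [← Submodule.topologicalClosure_coe, hdense]
    exact mem_univ F
  have hlim : Tendsto (cesaroAverage 𝕜 fun i => F (u i)) atTop (𝓝 (∫ x, F x ∂μ)) :=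
    closure_minimal (fun g hg => tendsto_cesaroAverage_of_mem_span hS hg)
      (isClosed_setOf_tendsto_cesaroAverage μ u) hF
  have haverage (N : ℕ) : cesaroAverage 𝕜 (fun i => F (u i)) N =
      (cesaroAverage ℝ (fun i => f (u i)) N : ℝ) := by
    simp [cesaroAverage, F]
  rw [funext haverage] at hlim
  simpa [Function.comp_def, F, integral_ofReal] using (RCLike.continuous_re.tendsto _).comp hlim

theorem integral_fourier_of_ne_zero {T : ℝ} [hT : Fact (0 < T)] {n : ℤ} (hn : n ≠ 0) :
    ∫ y : AddCircle T, fourier n y ∂haarAddCircle = 0 :=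
  integral_eq_zero_of_add_right_eq_neg (fourier_add_half_inv_index hn hT.out)

theorem equidistributed_haarAddCircle_of_fourier {T : ℝ} [Fact (0 < T)] {u : ℕ → AddCircle T}
    (hu : ∀ n : ℤ, n ≠ 0 → Tendsto (cesaroAverage ℂ fun i => fourier n (u i)) atTop (𝓝 0)) :
    Equidistributed haarAddCircle u := by
  refine equidistributed_of_dense_span span_fourier_closure_eq_top ?_
  rintro _ ⟨n, rfl⟩
  rcases eq_or_ne n 0 with rfl | hn
  · simp only [fourier_zero, integral_const, probReal_univ, one_smul]
    refine tendsto_const_nhds.congr' ?_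
    filter_upwards [eventually_ne_atTop 0] with N hN
    exact (cesaroAverage_const ℂ 1 hN).symm
  · simpa only [integral_fourier_of_ne_zero hn] using hu n hn

theorem ae_equidistributed_zsmul {T : ℝ} [Fact (0 < T)] {a : ℕ → ℤ} (ha : Function.Injective a) :
    ∀ᵐ y : AddCircle T ∂haarAddCircle, Equidistributed haarAddCircle fun i => a i • y := by
  have horth (n : ℤ) (hn : n ≠ 0) :
      Orthonormal ℂ fun i => fourierLp (T := T) 2 (n * a i) :=
    orthonormal_fourier.comp _ ((mul_right_injective₀ hn).comp ha)
  have hcoe : ∀ᵐ y : AddCircle T ∂haarAddCircle, ∀ n, fourierLp 2 n y = fourier n y :=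
    ae_all_iff.2 (coeFn_fourierLp 2)
  have hfourier : ∀ᵐ y : AddCircle T ∂haarAddCircle, ∀ n : ℤ, n ≠ 0 →
      Tendsto (cesaroAverage ℂ fun i => fourierLp 2 (n * a i) y) atTop (𝓝 0) := by
    refine ae_all_iff.2 fun n => eventually_imp_distrib_left.2 fun hn => ?_
    refine ae_tendsto_cesaroAverage_zero_of_orthonormal (horth n hn) (C := 1) fun i => ?_
    filter_upwards [hcoe] with y hy
    rw [hy, fourier_apply, Circle.norm_coe]
  filter_upwards [hcoe, hfourier] with y hy hlim
  refine equidistributed_haarAddCircle_of_fourier fun n hn => ?_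
  simpa only [hy, fourier_apply, mul_smul] using hlim n hn

end WeylCriterion

section TentMap

/-- The tent map, extended to `ℝ` by the same formula. -/
noncomputable def tentMap (x : ℝ) : ℝ := 1 - |1 - 2 * x|

local instance : Fact ((0 : ℝ) < 2) := ⟨two_pos⟩

theorem norm_addCircle_two_coe {x : ℝ} (hx : x ∈ Icc (0 : ℝ) 1) :
    ‖(x : AddCircle (2 : ℝ))‖ = x := by
  have habs : |x| = x := abs_of_nonneg hx.1
  have hhalf : |x| ≤ |(2 : ℝ)| / 2 := by simpa [habs] using hx.2
  rw [(norm_coe_eq_abs_iff 2 two_ne_zero).2 hhalf, habs]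

theorem norm_two_zsmul_coe_eq_tentMap {x : ℝ} (hx : x ∈ Icc (0 : ℝ) 1) :
    ‖(2 : ℤ) • (x : AddCircle (2 : ℝ))‖ = tentMap x := by
  rw [← AddCircle.coe_zsmul, zsmul_eq_mul, Int.cast_ofNat, tentMap]
  rcases le_total x (1 / 2) with hle | hge
  · rw [norm_addCircle_two_coe ⟨by linarith [hx.1], by linarith⟩, abs_of_nonneg (by linarith)]
    ring
  · have hreflect :
        ((2 * x : ℝ) : AddCircle (2 : ℝ)) = -((2 - 2 * x : ℝ) : AddCircle (2 : ℝ)) := by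
      rw [← AddCircle.coe_neg, neg_sub, AddCircle.coe_sub, coe_period, sub_zero]
    rw [hreflect, norm_neg, norm_addCircle_two_coe ⟨by linarith [hx.2], by linarith⟩,
      abs_of_nonpos (by linarith)]
    ring

theorem semiconj_norm_two_zsmul_tentMap :
    Function.Semiconj (fun y : AddCircle (2 : ℝ) => ‖y‖) (fun y => (2 : ℤ) • y) tentMap := by
  intro y
  obtain ⟨x, hx, rfl⟩ : y ∈ ((↑) : ℝ → AddCircle (2 : ℝ)) '' Ico (-1) (-1 + 2) := by
    rw [coe_image_Ico_eq]
    exact mem_univ y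
  have habs : |x| ∈ Icc (0 : ℝ) 1 :=
    ⟨abs_nonneg x, abs_le.2 ⟨hx.1, by linarith [hx.2]⟩⟩
  have h : ‖(2 : ℤ) • ((|x| : ℝ) : AddCircle (2 : ℝ))‖ =
      tentMap ‖((|x| : ℝ) : AddCircle (2 : ℝ))‖ := by
    rw [norm_two_zsmul_coe_eq_tentMap habs, norm_addCircle_two_coe habs]
  rcases abs_choice x with hpos | hneg
  · rwa [hpos] at h
  · rwa [hneg, AddCircle.coe_neg, smul_neg, norm_neg, norm_neg] at h

theorem norm_two_pow_zsmul_coe_eq_tentMap_iterate {x : ℝ} (hx : x ∈ Icc (0 : ℝ) 1) (i : ℕ) :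
    ‖(2 : ℤ) ^ i • (x : AddCircle (2 : ℝ))‖ = tentMap^[i] x := by
  have h := (semiconj_norm_two_zsmul_tentMap.iterate_right i) x
  rwa [norm_addCircle_two_coe hx, smul_iterate] at h

theorem haarAddCircle_closedBall {T : ℝ} [hT : Fact (0 < T)] (x : AddCircle T) (r : ℝ) :
    haarAddCircle (Metric.closedBall x r) = ENNReal.ofReal (min 1 (2 * r / T)) := by
  rw [← div_self hT.out.ne', min_div_div_right hT.out.le, ENNReal.ofReal_div_of_pos hT.out,
    ← AddCircle.volume_closedBall T, volume_eq_smul_haarAddCircle, Measure.smul_apply,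
    smul_eq_mul, mul_comm,
    ENNReal.mul_div_cancel_right (by simpa using hT.out) ENNReal.ofReal_ne_top]

theorem measurePreserving_norm_addCircle_two :
    MeasurePreserving (fun y : AddCircle (2 : ℝ) => ‖y‖) haarAddCircle
      (volume.restrict (Icc (0 : ℝ) 1)) := by
  refine ⟨measurable_norm, ?_⟩
  have : IsProbabilityMeasure (haarAddCircle.map fun y : AddCircle (2 : ℝ) => ‖y‖) :=
    Measure.isProbabilityMeasure_map measurable_norm.aemeasurable
  refine Measure.ext_of_Iic _ _ fun r => ?_
  have hpreimage : (fun y : AddCircle (2 : ℝ) => ‖y‖) ⁻¹' Iic r = Metric.closedBall 0 r := by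
    ext y
    simp
  have hinter : Iic r ∩ Icc 0 1 = Icc 0 (min 1 r) := by
    ext x
    simp only [mem_inter_iff, mem_Iic, mem_Icc, le_min_iff]
    tauto
  rw [Measure.map_apply measurable_norm measurableSet_Iic, hpreimage,
    haarAddCircle_closedBall, Measure.restrict_apply measurableSet_Iic, hinter, Real.volume_Icc,
    sub_zero, mul_div_cancel_left₀ r two_ne_zero]

theorem quasiMeasurePreserving_coe_addCircle_two :
    Measure.QuasiMeasurePreserving ((↑) : ℝ → AddCircle (2 : ℝ)) (volume.restrict (Icc 0 1))
      haarAddCircle := by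
  have hsub : Icc (0 : ℝ) 1 ⊆ Ioc (-1) (-1 + 2) := fun x hx =>
    ⟨by linarith [hx.1], by linarith [hx.2]⟩
  refine (AddCircle.measurePreserving_mk (2 : ℝ) (-1)).quasiMeasurePreserving.mono
    (Measure.absolutelyContinuous_of_le (Measure.restrict_mono_set volume hsub)) ?_
  rw [volume_eq_smul_haarAddCircle]
  exact Measure.AbsolutelyContinuous.rfl.smul_left _

theorem ae_equidistributed_tentMap :
    ∀ᵐ x ∂volume.restrict (Icc (0 : ℝ) 1),
      Equidistributed (volume.restrict (Icc (0 : ℝ) 1)) fun i => tentMap^[i] x := by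
  have hpow : Function.Injective fun i : ℕ => (2 : ℤ) ^ i := Int.pow_right_injective (by decide)
  filter_upwards [quasiMeasurePreserving_coe_addCircle_two.ae (ae_equidistributed_zsmul hpow),
    ae_restrict_mem measurableSet_Icc] with x hx hmem
  simpa only [Function.comp_def, norm_two_pow_zsmul_coe_eq_tentMap_iterate hmem] using
    hx.comp_measurePreserving measurePreserving_norm_addCircle_two continuous_norm

end TentMap

/-- Ulam–von Neumann: for the tent map `g(x) = 1 - |1 - 2x|`, for Lebesgue-almost every
`x₀ ∈ [0,1]` the orbit of `x₀` is uniformly equidistributed in `[0,1]`. -/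
theorem tent_map_equidistribution (g : ℝ → ℝ)
    (hg : ∀ x, g x = 1 - |1 - 2 * x|) :
    ∀ᵐ x₀ ∂(volume.restrict (Set.Icc (0 : ℝ) 1)),
      ∀ a b : ℝ, 0 ≤ a → a ≤ b → b ≤ 1 →
        Filter.Tendsto
          (fun N : ℕ =>
            ((Finset.range N).filter (fun i => g^[i] x₀ ∈ Set.Icc a b)).card / (N : ℝ))
          Filter.atTop (nhds (b - a)) := by
  obtain rfl : g = tentMap := funext hg
  have : IsProbabilityMeasure (volume.restrict (Icc (0 : ℝ) 1)) := ⟨by simp⟩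
  filter_upwards [ae_equidistributed_tentMap] with x₀ hx₀ a b ha hab hb
  have hfrontier : volume.restrict (Icc (0 : ℝ) 1) (frontier (Icc a b)) = 0 := by
    rw [frontier_Icc hab]
    exact (Set.toFinite {a, b}).measure_zero _
  have hvolume : (volume.restrict (Icc (0 : ℝ) 1)).real (Icc a b) = b - a := by
    rw [measureReal_restrict_apply measurableSet_Icc,
      inter_eq_left.2 (Icc_subset_Icc ha hb), Real.volume_real_Icc_of_le hab]
  simpa only [hvolume] using hx₀.tendsto_card_filter_div measurableSet_Icc hfrontier
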